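/- Let X be a Banach space (with the metric induced by its norm) and Λ a compact metric space, and let w : Λ × X → X be a weakly* hyperbolic IFS. Then the Hutchinson–Barnsley operator F has a global attractor: there exists a nonempty compact set K ⊆ X with F(K) = K such that Fⁿ(B) → K in the Hausdorff metric for every nonempty compact B ⊆ X. -/

import Mathlib

open Metric Set Filter Topology

/-- `seqComp w σ n = w_{σ₁} ∘ ⋯ ∘ w_{σₙ}` (with `σ i` denoting `σ_{i+1}`). -/
def seqComp {Λ X : Type*} (w : Λ → X → X) (σ : ℕ → Λ) : ℕ → X → X
  | 0 => id
  | n + 1 => seqComp w σ n ∘ w (σ n)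

/-- The Hutchinson–Barnsley operator on sets: `F(A) = w(Λ × A)`. -/
def HBset {Λ X : Type*} (w : Λ → X → X) (A : Set X) : Set X :=
  (fun p : Λ × X => w p.1 p.2) '' (Set.univ ×ˢ A)

theorem abstract_attractor {Y : Type*} [MetricSpace Y] [CompleteSpace Y] [Nonempty Y]
    (F : Y → Y) (hF : Continuous F) (η : ℝ) (hη : 0 < η)
    (h : ∀ ε > (0 : ℝ), ∃ n₀ : ℕ, ∀ n ≥ n₀, ∀ A B : Y,
      dist (F^[n] A) (F^[n] B) ≤ (dist A B / η + 1) * ε) :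
    ∃ K : Y, F K = K ∧ ∀ B, Tendsto (fun n => F^[n] B) atTop (𝓝 K) := by
  obtain ⟨A⟩ := ‹Nonempty Y›
  -- bounded orbit
  obtain ⟨M, hM⟩ : ∃ M : ℝ, ∀ k, dist (F^[k] A) A ≤ M := by
    obtain ⟨N, hN⟩ := h (η / 2) (by positivity)
    set N' := N + 1
    set C := η / 2 + dist (F^[N'] A) A
    set S := ∑ k ∈ Finset.range N', dist (F^[k] A) A
    have hC : 0 ≤ C := by positivity
    have hS : 0 ≤ S := Finset.sum_nonneg fun _ _ => dist_nonneg
    refine ⟨S + 2 * C, fun k => ?_⟩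
    induction k using Nat.strong_induction_on with
    | _ k ih =>
      by_cases hk : k < N'
      · have : dist (F^[k] A) A ≤ S :=
          Finset.single_le_sum (f := fun k => dist (F^[k] A) A)
            (fun _ _ => dist_nonneg) (Finset.mem_range.2 hk)
        linarith
      · obtain ⟨j, rfl⟩ := Nat.exists_eq_add_of_le (not_lt.1 hk)
        have h1 := ih j (by omega)
        have h2 := hN N' (by omega) (F^[j] A) A
        rw [← Function.iterate_add_apply] at h2
        have h3 := dist_triangle (F^[N' + j] A) (F^[N'] A) A
        have h4 : (dist (F^[j] A) A / η + 1) * (η / 2) = dist (F^[j] A) A / 2 + η / 2 := by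
          field_simp
        rw [h4] at h2
        have : C = η / 2 + dist (F^[N'] A) A := rfl
        linarith
  have hM0 : 0 ≤ M := dist_nonneg.trans (hM 0)
  have unif : ∀ R : ℝ, 0 ≤ R → ∀ ε > 0, ∃ n₀ : ℕ, ∀ n ≥ n₀, ∀ A B : Y, dist A B ≤ R →
      dist (F^[n] A) (F^[n] B) < ε := by
    intro R hR ε hε
    have hp : 0 < R / η + 1 := by positivity
    obtain ⟨n₀, hn⟩ := h (ε / 2 / (R / η + 1)) (by positivity)
    refine ⟨n₀, fun n hn' A B hAB => (hn n hn' A B).trans_lt ?_⟩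
    calc (dist A B / η + 1) * (ε / 2 / (R / η + 1))
        ≤ (R / η + 1) * (ε / 2 / (R / η + 1)) := by gcongr
      _ = ε / 2 := by field_simp
      _ < ε := by linarith
  have hc : CauchySeq fun n => F^[n] A := by
    rw [Metric.cauchySeq_iff']
    intro ε hε
    obtain ⟨N, hN⟩ := unif M hM0 ε hε
    refine ⟨N, fun n hn => ?_⟩
    obtain ⟨k, rfl⟩ := Nat.exists_eq_add_of_le hn
    have := hN N le_rfl (F^[k] A) A (hM k)
    rwa [← Function.iterate_add_apply] at this
  obtain ⟨K, hK⟩ := cauchySeq_tendsto_of_complete hc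
  refine ⟨K, isFixedPt_of_tendsto_iterate hK hF.continuousAt, fun B => ?_⟩
  have : Tendsto (fun n => dist (F^[n] A) (F^[n] B)) atTop (𝓝 0) := by
    rw [Metric.tendsto_atTop]
    intro ε hε
    obtain ⟨N, hN⟩ := unif (dist A B) dist_nonneg ε hε
    refine ⟨N, fun n hn => ?_⟩
    rw [Real.dist_0_eq_abs, abs_of_nonneg dist_nonneg]
    exact hN n hn A B le_rfl
  exact hK.congr_dist this

theorem seqComp_congr {Λ X : Type*} (w : Λ → X → X) (σ τ : ℕ → Λ) (n : ℕ)
    (h : ∀ i < n, σ i = τ i) : seqComp w σ n = seqComp w τ n := by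
  induction n with
  | zero => rfl
  | succ n ih =>
    simp only [seqComp]
    rw [ih fun i hi => h i (by omega), h n (by omega)]

theorem mem_HBset_iterate {Λ X : Type*} [Nonempty Λ] (w : Λ → X → X) (n : ℕ) (A : Set X) (z : X) :
    z ∈ (HBset w)^[n] A ↔ ∃ σ : ℕ → Λ, ∃ x ∈ A, seqComp w σ n x = z := by
  induction n generalizing A z with
  | zero => simp [seqComp]
  | succ n ih =>
    rw [Function.iterate_succ_apply, ih]
    constructor
    · rintro ⟨σ, x, ⟨⟨l, y⟩, ⟨-, hy⟩, rfl⟩, rfl⟩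
      refine ⟨Function.update σ n l, y, hy, ?_⟩
      simp only [seqComp, Function.comp, Function.update_self]
      rw [seqComp_congr w _ σ n]
      intro i hi
      exact Function.update_of_ne hi.ne _ _
    · rintro ⟨σ, x, hx, rfl⟩
      exact ⟨σ, w (σ n) x, ⟨(σ n, x), ⟨mem_univ _, hx⟩, rfl⟩, rfl⟩

theorem chain_bound {X : Type*} [NormedAddCommGroup X] [NormedSpace ℝ X] (f : X → X)
    (η ε : ℝ) (hη : 0 < η) (hε : 0 < ε)
    (h : ∀ x y, dist x y < η → dist (f x) (f y) < ε) (x y : X) :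
    dist (f x) (f y) ≤ (dist x y / η + 1) * ε := by
  set m := ⌊dist x y / η⌋₊ + 1 with hm
  have hm0 : (0 : ℝ) < m := by positivity
  have hlt : dist x y / m < η := by
    have := Nat.lt_floor_add_one (dist x y / η)
    rw [div_lt_iff₀ hη] at this
    rw [div_lt_iff₀ hm0, hm]; push_cast; linarith
  have hle : (m : ℝ) ≤ dist x y / η + 1 := by
    have := Nat.floor_le (a := dist x y / η) (by positivity)
    rw [hm]; push_cast; linarith
  let p : ℕ → X := fun i => x + ((i : ℝ) / m) • (y - x)
  have hs : ∀ i, dist (p i) (p (i + 1)) < η := by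
    intro i
    have : p i - p (i + 1) = (-(1 / (m : ℝ))) • (y - x) := by
      simp only [p]
      rw [add_sub_add_left_eq_sub, ← sub_smul]
      congr 1; push_cast; ring
    rw [dist_eq_norm, this, norm_smul, norm_neg, Real.norm_of_nonneg (by positivity),
      ← dist_eq_norm, dist_comm y x, one_div_mul_eq_div]
    exact hlt
  have h0 : p 0 = x := by simp [p]
  have h1 : p m = y := by simp [p]
  calc dist (f x) (f y) = dist (f (p 0)) (f (p m)) := by rw [h0, h1]
    _ ≤ ∑ i ∈ Finset.range m, dist (f (p i)) (f (p (i + 1))) :=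
      dist_le_range_sum_dist (fun i => f (p i)) m
    _ ≤ ∑ i ∈ Finset.range m, ε := Finset.sum_le_sum fun i _ => (h _ _ (hs i)).le
    _ = m * ε := by simp
    _ ≤ _ := by gcongr

theorem exists_close {X : Type*} [MetricSpace X] (A B : TopologicalSpace.NonemptyCompacts X)
    (x : X) (hx : x ∈ (A : Set X)) : ∃ y ∈ (B : Set X), dist x y ≤ dist A B := by
  obtain ⟨y, hy, h⟩ := B.isCompact.exists_infDist_eq_dist B.nonempty x
  refine ⟨y, hy, ?_⟩
  rw [← h, NonemptyCompacts.dist_eq]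
  exact infDist_le_hausdorffDist_of_mem hx
    (hausdorffEDist_ne_top_of_nonempty_of_bounded A.nonempty B.nonempty
      A.isCompact.isBounded B.isCompact.isBounded)

/-- A weakly* hyperbolic IFS on a Banach space has a global attractor which is
a compact invariant set. -/
theorem stmt_15 {Λ X : Type*} [MetricSpace Λ] [CompactSpace Λ] [Nonempty Λ]
    [NormedAddCommGroup X] [NormedSpace ℝ X] [CompleteSpace X]
    (w : Λ → X → X) (hw : Continuous fun p : Λ × X => w p.1 p.2)
    (hyp : ∃ η > (0 : ℝ), ∀ ε > (0 : ℝ), ∃ n₀ : ℕ, ∀ n ≥ n₀, ∀ σ : ℕ → Λ, ∀ x y : X,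
      dist x y < η → dist (seqComp w σ n x) (seqComp w σ n y) < ε) :
    ∃ K : Set X, K.Nonempty ∧ IsCompact K ∧ HBset w K = K ∧
      ∀ B : Set X, B.Nonempty → IsCompact B →
        Tendsto (fun n => hausdorffDist ((HBset w)^[n] B) K) atTop (𝓝 0) := by
  obtain ⟨η, hη, hyp⟩ := hyp
  let F : TopologicalSpace.NonemptyCompacts X → TopologicalSpace.NonemptyCompacts X := fun A =>
    ⟨⟨HBset w A, (isCompact_univ.prod A.isCompact).image hw⟩,
      (univ_nonempty.prod A.nonempty).image _⟩
  have hFc : ∀ A, (F A : Set X) = HBset w A := fun A => rfl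
  have hFn : ∀ n A, ((F^[n] A : TopologicalSpace.NonemptyCompacts X) : Set X)
      = (HBset w)^[n] A := by
    intro n
    induction n with
    | zero => intro A; rfl
    | succ n ih => intro A; rw [Function.iterate_succ_apply, ih, hFc, Function.iterate_succ_apply]
  have hFcont : Continuous F := by
    rw [continuous_iff_continuousAt]
    intro K
    rw [Metric.continuousAt_iff]
    intro ε hε
    have hu := (isCompact_univ.prod K.isCompact).uniformContinuousAt_of_continuousAt
      (fun p : Λ × X => w p.1 p.2) (fun a _ => hw.continuousAt)
      (Metric.dist_mem_uniformity (half_pos hε))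
    obtain ⟨δ, hδ, hu⟩ := Metric.mem_uniformity_dist.1 hu
    have key : ∀ l : Λ, ∀ x ∈ (K : Set X), ∀ y, dist x y < δ → dist (w l x) (w l y) < ε / 2 := by
      intro l x hx y hxy
      have hd : dist (l, x) (l, y) < δ := by
        rw [Prod.dist_eq]; exact max_lt (by simpa using hδ) hxy
      exact hu hd ⟨mem_univ _, hx⟩
    refine ⟨δ, hδ, fun {A} hA => ?_⟩
    refine lt_of_le_of_lt ?_ (half_lt_self hε)
    rw [NonemptyCompacts.dist_eq]
    refine hausdorffDist_le_of_mem_dist (half_pos hε).le ?_ ?_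
    · rintro _ ⟨⟨l, x⟩, ⟨-, hx⟩, rfl⟩
      obtain ⟨y, hy, hxy⟩ := exists_close A K x hx
      refine ⟨w l y, ⟨(l, y), ⟨mem_univ _, hy⟩, rfl⟩, ?_⟩
      rw [dist_comm]
      exact (key l y hy x (by rw [dist_comm]; exact hxy.trans_lt hA)).le
    · rintro _ ⟨⟨l, x⟩, ⟨-, hx⟩, rfl⟩
      obtain ⟨y, hy, hxy⟩ := exists_close K A x hx
      refine ⟨w l y, ⟨(l, y), ⟨mem_univ _, hy⟩, rfl⟩, ?_⟩
      exact (key l x hx y (by rw [dist_comm] at hA; exact hxy.trans_lt hA)).le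
  have : Nonempty (TopologicalSpace.NonemptyCompacts X) := ⟨{(0 : X)}⟩
  obtain ⟨K, hK, hlim⟩ := abstract_attractor F hFcont η hη (by
    intro ε hε
    obtain ⟨n₀, hn₀⟩ := hyp ε hε
    refine ⟨n₀, fun n hn A B => ?_⟩
    have half : ∀ A B : TopologicalSpace.NonemptyCompacts X, ∀ z ∈ (HBset w)^[n] (A : Set X),
        ∃ z' ∈ (HBset w)^[n] (B : Set X), dist z z' ≤ (dist A B / η + 1) * ε := by
      intro A B z hz
      obtain ⟨σ, x, hx, rfl⟩ := (mem_HBset_iterate w n _ z).1 hz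
      obtain ⟨y, hy, hxy⟩ := exists_close A B x hx
      refine ⟨seqComp w σ n y, (mem_HBset_iterate w n _ _).2 ⟨σ, y, hy, rfl⟩, ?_⟩
      refine (chain_bound _ η ε hη hε (hn₀ n hn σ) x y).trans ?_
      gcongr
    rw [NonemptyCompacts.dist_eq, hFn, hFn]
    refine hausdorffDist_le_of_mem_dist (by positivity) (half A B) ?_
    rw [dist_comm]
    exact half B A)
  refine ⟨K, K.nonempty, K.isCompact, ?_, fun B hB hBc => ?_⟩
  · rw [← hFc, hK]
  · have := tendsto_iff_dist_tendsto_zero.1 (hlim ⟨⟨B, hBc⟩, hB⟩)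
    simp only [NonemptyCompacts.dist_eq, hFn] at this
    exact this
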